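/- Each face boundary move (M2), replacing a disk A² of squares in the boundary of a 3-cube F³ by the complementary disk B² = Cl(∂F³ \ A²), extends to an ambient isotopy of ℝ⁴; in particular a cubical 2-knot and its image under an M2-move are ambient isotopic. -/

import Mathlib

/-!
Since the disk `A` is connected and made of at most three squares, the cube has an axis such that
exactly one of its two squares orthogonal to this axis belongs to `A`. Tilt each of the other
squares, those of `A` and those of `B` in opposite directions, so that it becomes a graph along the
axis. Then the cube is the region between two graphs over a planar domain, `A` being the lower graph
and `B` the upper one. A fibrewise isotopy pushing the lower graph up to the upper one moves `A`
onto `B`, and it remains to keep the rest of `K` fixed. By invariance of domain for surfaces, the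
points of `K` near an interior point of `A` all lie in `A`. Hence the closure of `K \ A` meets the
cube at most in `∂A`, where the two graphs agree, and the region swept by the isotopy can be chosen
to avoid the rest of `K`.
-/

open scoped Classical

/-- A `k`-dimensional face of the cubulation of `ℝⁿ` at scale `1/m`:
free coordinates in `S`, the rest fixed at lattice values `v i / m`. -/
def sFace (n m : ℕ) (v : Fin n → ℤ) (S : Finset (Fin n)) : Set (Fin n → ℝ) :=
  {x | ∀ i, (i ∈ S → (v i : ℝ) / m ≤ x i ∧ x i ≤ ((v i : ℝ) + 1) / m) ∧
        (i ∉ S → x i = (v i : ℝ) / m)}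

/-- The collection of all `k`-faces of the cubulation of `ℝⁿ` at scale `1/m`. -/
def sFaces (n m k : ℕ) : Set (Set (Fin n → ℝ)) :=
  {F | ∃ (v : Fin n → ℤ) (S : Finset (Fin n)), S.card = k ∧ F = sFace n m v S}

/-- The `k`-skeleton of the cubulation of `ℝⁿ` at scale `1/m`. -/
def skeleton (n m k : ℕ) : Set (Fin n → ℝ) := ⋃₀ sFaces n m k


/-- The closed unit 2-disk. -/
def Disk2 : Set (EuclideanSpace ℝ (Fin 2)) := Metric.closedBall 0 1

/-- The standard 2-sphere. -/
def Sphere2 : Set (EuclideanSpace ℝ (Fin 3)) := Metric.sphere 0 1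

/-- A cubical 2-knot: an embedded 2-sphere contained in the 2-skeleton (scaffolding)
of some subdivision of the canonical cubulation of ℝ⁴. -/
def IsCubical2Knot (K : Set (Fin 4 → ℝ)) : Prop :=
  Nonempty (↥K ≃ₜ ↥Sphere2) ∧ ∃ m : ℕ, 0 < m ∧ K ⊆ skeleton 4 m 2

/-- Ambient isotopy in ℝ⁴: a continuous family of homeomorphisms of ℝ⁴ starting at the
identity and carrying `K₁` onto `K₂`. -/
def AmbientIsotopic (K₁ K₂ : Set (Fin 4 → ℝ)) : Prop :=
  ∃ H : ℝ → ((Fin 4 → ℝ) ≃ₜ (Fin 4 → ℝ)),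
    Continuous (fun q : ℝ × (Fin 4 → ℝ) => H q.1 q.2) ∧
    H 0 = Homeomorph.refl (Fin 4 → ℝ) ∧
    (H 1) '' K₁ = K₂

/-- A face boundary move (M2) at scale `1/m`, in the 3-cube `F` of the cubulation:
a connected disk `A = ⋃₀ 𝒜` of at most three squares of `∂F`, equal to `K ∩ F`,
is replaced by the complementary disk `B` in `∂F`. -/
def M2MoveAt (m : ℕ) (F : Set (Fin 4 → ℝ)) (K K' : Set (Fin 4 → ℝ)) : Prop :=
  ∃ 𝒜 : Set (Set (Fin 4 → ℝ)),
    𝒜 ⊆ {G ∈ sFaces 4 m 2 | G ⊆ F} ∧ 𝒜.Nonempty ∧ 𝒜.ncard ≤ 3 ∧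
    K ∩ F = ⋃₀ 𝒜 ∧
    Nonempty (↥(⋃₀ 𝒜) ≃ₜ ↥Disk2) ∧
    K' = (K \ ⋃₀ 𝒜) ∪ ⋃₀ ({G ∈ sFaces 4 m 2 | G ⊆ F} \ 𝒜)

/-- A face boundary move (M2) performed in some 3-cube of some subdivision (M1-moves
being subsumed by the choice of the subdivision scale `m`). -/
def M2Move (K K' : Set (Fin 4 → ℝ)) : Prop :=
  ∃ m : ℕ, 0 < m ∧ ∃ F ∈ sFaces 4 m 3, M2MoveAt m F K K'

/-- Equivalence by a finite sequence of cubulated moves (M1 and M2). -/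
def CubulatedEquiv (K₁ K₂ : Set (Fin 4 → ℝ)) : Prop :=
  Relation.ReflTransGen (fun K K' => M2Move K K' ∨ M2Move K' K) K₁ K₂

open Set Filter Topology Metric

section ContinuousLog

variable {X : Type*} [TopologicalSpace X]

/-- A complex-valued function has a continuous logarithm. For functions on the circle this is the
vanishing of the winding number about `0`. -/
def HasContinuousLog (f : X → ℂ) : Prop :=
  ∃ l : X → ℂ, Continuous l ∧ ∀ x, Complex.exp (l x) = f x

theorem hasContinuousLog_const {c : ℂ} (hc : c ≠ 0) : HasContinuousLog fun _ : X => c :=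
  ⟨fun _ => Complex.log c, continuous_const, fun _ => Complex.exp_log hc⟩

theorem HasContinuousLog.of_homotopy {H : unitInterval × X → ℂ} (hH : Continuous H)
    (hne : ∀ p, H p ≠ 0) (h : HasContinuousLog fun x => H (0, x)) :
    HasContinuousLog fun x => H (1, x) := by
  obtain ⟨l, hl, hexp⟩ := h
  let H' : C(unitInterval × X, {z : ℂ // z ≠ 0}) := ⟨fun p => ⟨H p, hne p⟩, hH.subtype_mk _⟩
  let L : C(unitInterval × X, ℂ) := Complex.isCoveringMap_exp.liftHomotopy H' ⟨l, hl⟩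
    fun x => Subtype.ext (hexp x).symm
  have hL : ∀ p, Complex.exp (L p) = H p := fun p => congrArg Subtype.val
    (congrFun (Complex.isCoveringMap_exp.liftHomotopy_lifts H' ⟨l, hl⟩ _) p)
  exact ⟨fun x => L (1, x), by fun_prop, fun x => hL (1, x)⟩

/- If `l` is a logarithm of `f`, the difference `l ∘ τ - l` takes values in the discrete set
`exp ⁻¹' {-1}`, so it is constant; but it changes sign under the involution `τ`. -/
theorem not_hasContinuousLog_of_odd [PreconnectedSpace X] [Nonempty X] {τ : X → X}
    (hτ : Continuous τ) (hinv : Function.Involutive τ) {f : X → ℂ} (hf : ∀ x, f (τ x) = -f x) :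
    ¬HasContinuousLog f := by
  rintro ⟨l, hl, hexp⟩
  have hd : ∀ x, Complex.exp (l (τ x) - l x) = -1 := fun x => by
    have hne : f x ≠ 0 := hexp x ▸ Complex.exp_ne_zero _
    rw [Complex.exp_sub, hexp, hexp, hf, neg_div, div_self hne]
  have hconst : ∀ x y, l (τ x) - l x = l (τ y) - l y :=
    Complex.isCoveringMap_exp.const_of_comp (by fun_prop) fun x y =>
      Subtype.ext ((hd x).trans (hd y).symm)
  obtain ⟨x⟩ := ‹Nonempty X›
  have hzero : l (τ x) - l x = 0 := by
    have h := hconst (τ x) x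
    rw [hinv x] at h
    linear_combination -(1 / 2) * h
  have h := hd x
  rw [hzero, Complex.exp_zero] at h
  norm_num at h

theorem HasContinuousLog.sub_const_of_mem_ball {f : X → ℂ} (hf : Continuous f) {a b : ℂ} {ε : ℝ}
    (hball : Disjoint (range f) (ball b ε)) (ha : a ∈ ball b ε)
    (h : HasContinuousLog fun x => f x - a) : HasContinuousLog fun x => f x - b := by
  have hb : b ∈ ball b ε := mem_ball_self (dist_nonneg.trans_lt ha)
  have key := HasContinuousLog.of_homotopy
    (H := fun p : unitInterval × X => f p.2 - AffineMap.lineMap a b (p.1 : ℝ))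
    ((hf.comp continuous_snd).sub (AffineMap.lineMap_continuous.comp (by fun_prop)))
    (fun p h0 => hball.ne_of_mem (mem_range_self p.2)
      ((convex_ball b ε).lineMap_mem ha hb p.1.2) (sub_eq_zero.1 h0))
    (by simpa using h)
  simpa using key

end ContinuousLog

section InvarianceOfDomain

variable {f : ℂ → ℂ} {c : ℂ} {r : ℝ}

theorem add_mul_circle_mem_closedBall (c : ℂ) (hr : 0 ≤ r) (s : unitInterval) (z : Circle) :
    c + (s * r : ℝ) * z ∈ closedBall c r := by
  rw [mem_closedBall_iff_norm, add_sub_cancel_left, norm_mul, Circle.norm_coe, mul_one,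
    Complex.norm_real, Real.norm_of_nonneg (mul_nonneg s.2.1 hr)]
  exact mul_le_of_le_one_left hr s.2.2

theorem hasContinuousLog_circle_sub_of_notMem (hr : 0 ≤ r) (hf : ContinuousOn f (closedBall c r))
    {a : ℂ} (ha : a ∉ f '' closedBall c r) :
    HasContinuousLog fun z : Circle => f (c + r * z) - a := by
  have hmem := fun p : unitInterval × Circle => add_mul_circle_mem_closedBall c hr p.1 p.2
  have key := HasContinuousLog.of_homotopy
    (H := fun p : unitInterval × Circle => f (c + (p.1 * r : ℝ) * p.2) - a)
    ((hf.comp_continuous (by fun_prop) hmem).sub continuous_const)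
    (fun p h0 => ha ⟨_, hmem p, sub_eq_zero.1 h0⟩)
    (by
      simpa using hasContinuousLog_const (X := Circle) (c := f c - a)
        fun h0 => ha ⟨c, mem_closedBall_self hr, sub_eq_zero.1 h0⟩)
  simpa using key

theorem not_hasContinuousLog_circle_sub_center (hr : 0 < r)
    (hf : ContinuousOn f (closedBall c r)) (hinj : InjOn f (closedBall c r)) :
    ¬HasContinuousLog fun z : Circle => f (c + r * z) - f c := by
  intro h
  have hmem : ∀ z : Circle, c + r * z ∈ closedBall c r := fun z => by
    simpa using add_mul_circle_mem_closedBall c hr.le 1 z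
  have hmem' : ∀ p : unitInterval × Circle, c + (p.1 * r : ℝ) * (-p.2 : ℂ) ∈ closedBall c r :=
    fun p => by simpa using add_mul_circle_mem_closedBall c hr.le p.1 (-p.2)
  have hne : ∀ p : unitInterval × Circle,
      f (c + r * p.2) - f (c + (p.1 * r : ℝ) * (-p.2 : ℂ)) ≠ 0 := by
    rintro ⟨s, z⟩ h0
    have h1 := hinj (hmem z) (hmem' (s, z)) (sub_eq_zero.1 h0)
    have h2 : (z : ℂ) * (r * (1 + s) : ℝ) = 0 := by
      push_cast at h1 ⊢
      linear_combination h1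
    have : 0 < r * (1 + s) := mul_pos hr (by linarith [s.2.1])
    exact (mul_ne_zero z.coe_ne_zero (Complex.ofReal_ne_zero.2 this.ne')) h2
  have hcont : Continuous fun z : Circle => f (c + r * z) := hf.comp_continuous (by fun_prop) hmem
  have hcont' : Continuous fun p : unitInterval × Circle =>
      f (c + (p.1 * r : ℝ) * (-p.2 : ℂ)) := hf.comp_continuous (by fun_prop) hmem'
  have key := HasContinuousLog.of_homotopy ((hcont.comp continuous_snd).sub hcont') hne
    (by simpa using h)
  refine not_hasContinuousLog_of_odd (τ := fun z : Circle => -z) (by fun_prop) neg_involutive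
    (fun z => ?_) key
  simp [sub_eq_add_neg]

/- If the image missed values arbitrarily close to `f c`, the boundary loop `f (c + r z)` would have
winding number zero about such a value, hence about `f c`. But about `f c` this loop is homotopic to
the odd loop `f (c + r z) - f (c - r z)`. -/
theorem image_closedBall_mem_nhds (hr : 0 < r) (hf : ContinuousOn f (closedBall c r))
    (hinj : InjOn f (closedBall c r)) : f '' closedBall c r ∈ 𝓝 (f c) := by
  by_contra hnot
  have hmem : ∀ z : Circle, c + r * z ∈ closedBall c r := fun z => by
    simpa using add_mul_circle_mem_closedBall c hr.le 1 z
  have hγ : Continuous fun z : Circle => f (c + r * z) := hf.comp_continuous (by fun_prop) hmem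
  have hc : f c ∈ (range fun z : Circle => f (c + r * z))ᶜ := by
    rintro ⟨z, hz⟩
    have := hinj (hmem z) (mem_closedBall_self hr.le) hz
    simp [hr.ne'] at this
  obtain ⟨ε, hε, hball⟩ := isOpen_iff.1 (isCompact_range hγ).isClosed.isOpen_compl _ hc
  obtain ⟨a, haε, ha⟩ : ∃ a ∈ ball (f c) ε, a ∉ f '' closedBall c r :=
    not_subset.1 fun h => hnot (Filter.mem_of_superset (ball_mem_nhds _ hε) h)
  exact not_hasContinuousLog_circle_sub_center hr hf hinj
    ((hasContinuousLog_circle_sub_of_notMem hr.le hf ha).sub_const_of_mem_ball hγ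
      (disjoint_left.2 fun x hx hxb => hball hxb hx) haε)

theorem nhds_le_map_of_injective_of_planar_charts {N M : Type*} [TopologicalSpace N]
    [TopologicalSpace M] {f : N → M} (hf : Continuous f) (hinj : Function.Injective f)
    (φ : OpenPartialHomeomorph N ℂ) (ψ : OpenPartialHomeomorph M ℂ) {x : N} (hx : x ∈ φ.source)
    (hfx : f x ∈ ψ.source) : 𝓝 (f x) ≤ map f (𝓝 x) := by
  intro U hU
  have hpre : ∀ᶠ w in 𝓝 (φ x), f (φ.symm w) ∈ U ∩ ψ.source :=
    (φ.eventually_nhds' (fun y => f y ∈ U ∩ ψ.source) hx).2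
      (inter_mem hU (hf.continuousAt.preimage_mem_nhds (ψ.open_source.mem_nhds hfx)))
  obtain ⟨r, hr, hball⟩ := nhds_basis_closedBall.eventually_iff.1
    (hpre.and (φ.open_target.mem_nhds (φ.map_source hx)))
  have hfs : ∀ w ∈ closedBall (φ x) r, f (φ.symm w) ∈ U ∩ ψ.source := fun w hw => (hball hw).1
  have himage := image_closedBall_mem_nhds (f := fun w => ψ (f (φ.symm w))) hr
    (ψ.continuousOn.comp (hf.comp_continuousOn (φ.symm.continuousOn.mono fun w hw => (hball hw).2))
      fun w hw => (hfs w hw).2)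
    fun w hw w' hw' h => φ.symm.injOn (hball hw).2 (hball hw').2
      (hinj (ψ.injOn (hfs w hw).2 (hfs w' hw').2 h))
  rw [φ.left_inv hx] at himage
  have hnhds := ψ.symm.image_mem_nhds (ψ.map_source hfx) himage
  rw [ψ.left_inv hfx] at hnhds
  refine mem_of_superset hnhds ?_
  rintro _ ⟨_, ⟨w, hw, rfl⟩, rfl⟩
  rw [ψ.left_inv (hfs w hw).2]
  exact (hfs w hw).1

theorem isOpenMap_of_injective_of_finrank_eq_two {E H N M : Type*}
    [NormedAddCommGroup E] [NormedSpace ℝ E] [NormedAddCommGroup H] [NormedSpace ℝ H]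
    [TopologicalSpace N] [ChartedSpace E N] [TopologicalSpace M] [ChartedSpace H M]
    (hE : Module.finrank ℝ E = 2) (hH : Module.finrank ℝ H = 2) {f : N → M} (hf : Continuous f)
    (hinj : Function.Injective f) : IsOpenMap f := by
  have : FiniteDimensional ℝ E := Module.finite_of_finrank_pos (hE ▸ two_pos)
  have : FiniteDimensional ℝ H := Module.finite_of_finrank_pos (hH ▸ two_pos)
  let S : E ≃L[ℝ] ℂ := .ofFinrankEq (hE.trans Complex.finrank_real_complex.symm)
  let T : H ≃L[ℝ] ℂ := .ofFinrankEq (hH.trans Complex.finrank_real_complex.symm)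
  refine IsOpenMap.of_nhds_le fun x => ?_
  exact nhds_le_map_of_injective_of_planar_charts hf hinj
    ((chartAt E x).transHomeomorph S.toHomeomorph)
    ((chartAt H (f x)).transHomeomorph T.toHomeomorph)
    (mem_chart_source E x) (mem_chart_source H (f x))

theorem disjoint_range_closure_diff_range {X N : Type*} [TopologicalSpace X] [TopologicalSpace N]
    {f : N → X} {K : Set X} (hfK : ∀ x, f x ∈ K) (hopen : IsOpenMap (codRestrict f K hfK)) :
    Disjoint (range f) (closure (K \ range f)) := by
  obtain ⟨V, hV, hVrange⟩ := isOpen_induced_iff.1 hopen.isOpen_range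
  have hsub : ∀ y ∈ K, y ∈ V ↔ y ∈ range f := fun y hy => by
    have h := Set.ext_iff.1 hVrange ⟨y, hy⟩
    simpa [codRestrict, Subtype.ext_iff] using h
  refine (Disjoint.closure_right ?_ hV).mono_left
    (range_subset_iff.2 fun x => (hsub _ (hfK x)).2 ⟨x, rfl⟩)
  exact disjoint_left.2 fun y hyV hy => hy.2 ((hsub y hy.1).1 hyV)

end InvarianceOfDomain

section FiberwiseIsotopy

/-- A continuous family of self-homeomorphisms of `X`, starting at the identity; as in
`AmbientIsotopic`, the time parameter ranges over all of `ℝ`. -/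
def IsAmbientIsotopy {X : Type*} [TopologicalSpace X] (H : ℝ → X ≃ₜ X) : Prop :=
  Continuous (fun q : ℝ × X => H q.1 q.2) ∧ H 0 = Homeomorph.refl X

theorem IsAmbientIsotopy.conj {X Y : Type*} [TopologicalSpace X] [TopologicalSpace Y]
    {H : ℝ → Y ≃ₜ Y} (hH : IsAmbientIsotopy H) (Ψ : X ≃ₜ Y) :
    IsAmbientIsotopy fun t => (Ψ.trans (H t)).trans Ψ.symm := by
  refine ⟨Ψ.symm.continuous.comp (hH.1.comp (by fun_prop : Continuous fun q : ℝ × X =>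
    (q.1, Ψ q.2))), ?_⟩
  ext x
  simp [hH.2]

section OrderIso

variable {Y : Type*} [TopologicalSpace Y]

theorem continuous_orderIso_symm_family {f : Y → ℝ ≃o ℝ}
    (hf : Continuous fun p : Y × ℝ => f p.1 p.2) :
    Continuous fun p : Y × ℝ => (f p.1).symm p.2 := by
  have hsection : ∀ c : ℝ, Continuous fun p : Y × ℝ => f p.1 c := fun c =>
    hf.comp (continuous_fst.prodMk continuous_const)
  refine continuous_iff_continuousAt.2 fun p => tendsto_order.2 ⟨fun c hc => ?_, fun c hc => ?_⟩
  · simp only [OrderIso.lt_symm_apply] at hc ⊢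
    exact (hsection c).continuousAt.eventually_lt continuous_snd.continuousAt hc
  · simp only [OrderIso.symm_apply_lt] at hc ⊢
    exact continuous_snd.continuousAt.eventually_lt (hsection c).continuousAt hc

/-- The homeomorphism of `Y × ℝ` acting on the fibre over `y` by the increasing bijection `f y`. -/
def fiberwiseHomeomorph (f : Y → ℝ ≃o ℝ) (hf : Continuous fun p : Y × ℝ => f p.1 p.2) :
    Y × ℝ ≃ₜ Y × ℝ where
  toFun p := (p.1, f p.1 p.2)
  invFun p := (p.1, (f p.1).symm p.2)
  left_inv p := by simp
  right_inv p := by simp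
  continuous_toFun := continuous_fst.prodMk hf
  continuous_invFun := continuous_fst.prodMk (continuous_orderIso_symm_family hf)

theorem strictMono_lineMap_orderIso (u : ℝ ≃o ℝ) (t : unitInterval) :
    StrictMono fun z : ℝ => AffineMap.lineMap z (u z) (t : ℝ) := by
  intro z w hzw
  simp only [AffineMap.lineMap_apply_ring]
  have hu : u z < u w := u.lt_iff_lt.2 hzw
  rcases t.2.1.eq_or_lt with ht | ht
  · simpa [← ht] using hzw
  · have := mul_lt_mul_of_pos_left hu ht
    have := mul_le_mul_of_nonneg_left hzw.le (sub_nonneg.2 t.2.2)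
    linarith

theorem surjective_lineMap_orderIso (u : ℝ ≃o ℝ) (t : unitInterval) :
    Function.Surjective fun z : ℝ => AffineMap.lineMap z (u z) (t : ℝ) := by
  intro w
  have hcont : Continuous fun z : ℝ => AffineMap.lineMap z (u z) (t : ℝ) := by
    simp only [AffineMap.lineMap_apply_ring]
    have := u.continuous
    fun_prop
  refine mem_range_of_exists_le_of_exists_ge hcont ⟨min w (u.symm w), ?_⟩ ⟨max w (u.symm w), ?_⟩
  · exact (convex_Iic w).lineMap_mem (mem_Iic.2 (min_le_left _ _))
      (mem_Iic.2 <| u.le_symm_apply.1 (min_le_right _ _)) t.2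
  · exact (convex_Ici w).lineMap_mem (mem_Ici.2 (le_max_left _ _))
      (mem_Ici.2 <| u.symm_apply_le.1 (le_max_right _ _)) t.2

/-- The increasing bijection at time `t` on the straight line from the identity to `u`. -/
noncomputable def lineMapOrderIso (u : ℝ ≃o ℝ) (t : unitInterval) : ℝ ≃o ℝ :=
  (strictMono_lineMap_orderIso u t).orderIsoOfSurjective _ (surjective_lineMap_orderIso u t)

theorem lineMapOrderIso_apply (u : ℝ ≃o ℝ) (t : unitInterval) (z : ℝ) :
    lineMapOrderIso u t z = (1 - t) * z + t * u z :=
  AffineMap.lineMap_apply_ring _ _ _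

theorem exists_isAmbientIsotopy_fiberwise (f : Y → ℝ ≃o ℝ)
    (hf : Continuous fun p : Y × ℝ => f p.1 p.2) :
    ∃ H : ℝ → Y × ℝ ≃ₜ Y × ℝ, IsAmbientIsotopy H ∧ ∀ p, H 1 p = (p.1, f p.1 p.2) := by
  let τ : ℝ → unitInterval := projIcc 0 1 zero_le_one
  have hτ : Continuous fun q : ℝ × (Y × ℝ) => (τ q.1 : ℝ) :=
    continuous_subtype_val.comp (continuous_projIcc.comp continuous_fst)
  have hf' : Continuous fun q : ℝ × (Y × ℝ) => f q.2.1 q.2.2 := hf.comp continuous_snd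
  have hF : Continuous fun q : ℝ × (Y × ℝ) => lineMapOrderIso (f q.2.1) (τ q.1) q.2.2 := by
    simp only [lineMapOrderIso_apply]
    exact ((continuous_const.sub hτ).mul continuous_snd.snd).add (hτ.mul hf')
  have hFt (t : ℝ) : Continuous fun p : Y × ℝ => lineMapOrderIso (f p.1) (τ t) p.2 := by
    simpa only [Function.comp_def] using hF.comp (Continuous.prodMk_right t)
  let H (t : ℝ) := fiberwiseHomeomorph (fun y => lineMapOrderIso (f y) (τ t)) (hFt t)
  have hH (t : ℝ) (p : Y × ℝ) : H t p = (p.1, lineMapOrderIso (f p.1) (τ t) p.2) := rfl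
  refine ⟨H, ⟨continuous_snd.fst.prodMk hF, ?_⟩, fun p => ?_⟩
  · ext p <;> simp [hH, lineMapOrderIso_apply, τ]
  · simp [hH, lineMapOrderIso_apply, τ]

end OrderIso

section PushUp

variable {a b r : ℝ}

/-- The piecewise linear map of `ℝ` which, for `a < b` and `0 < r`, carries `a` to `b` and is the
identity outside `[a - r, b + r]`. -/
noncomputable def pushUp (a b r z : ℝ) : ℝ :=
  max z (min (b + (b - a + r) / r * (z - a)) (b + r / (b - a + r) * (z - a)))

theorem pushUp_self (hab : a ≤ b) : pushUp a b r a = b := by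
  simp [pushUp, hab]

theorem le_pushUp (z : ℝ) : z ≤ pushUp a b r z := le_max_left _ _

theorem pushUp_le (hab : a ≤ b) (hr : 0 < r) (z : ℝ) : pushUp a b r z ≤ z + (b - a) := by
  have hpos : 0 < b - a + r := by linarith
  refine max_le (by linarith) ?_
  rcases le_total z a with hz | hz
  · have : 1 ≤ (b - a + r) / r := (one_le_div hr).2 (by linarith)
    exact (min_le_left _ _).trans (by nlinarith)
  · have : r / (b - a + r) ≤ 1 := (div_le_one hpos).2 (by linarith)
    exact (min_le_right _ _).trans (by nlinarith)

theorem pushUp_of_le (hab : a ≤ b) (hr : 0 < r) {z : ℝ} (hz : z ≤ a - r) :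
    pushUp a b r z = z := by
  have hslope : 1 ≤ (b - a + r) / r := (one_le_div hr).2 (by linarith)
  have hcancel : (b - a + r) / r * r = b - a + r := div_mul_cancel₀ _ hr.ne'
  exact max_eq_left ((min_le_left _ _).trans (by nlinarith))

theorem pushUp_of_ge (hab : a ≤ b) (hr : 0 < r) {z : ℝ} (hz : b + r ≤ z) :
    pushUp a b r z = z := by
  have hpos : 0 < b - a + r := by linarith
  have hmul : r * (z - a) ≤ (z - b) * (b - a + r) := by nlinarith
  refine max_eq_left ((min_le_right _ _).trans ?_)
  rw [div_mul_eq_mul_div, ← le_sub_iff_add_le', div_le_iff₀ hpos]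
  exact hmul

theorem strictMono_pushUp (hab : a ≤ b) (hr : 0 < r) : StrictMono (pushUp a b r) := by
  intro z w hzw
  have : 0 < (b - a + r) / r := div_pos (by linarith) hr
  exact max_lt_max hzw (min_lt_min (by gcongr) (by gcongr))

theorem continuous_pushUp : Continuous (pushUp a b r) := by
  unfold pushUp
  fun_prop

/-- `pushUp a b r` as an increasing bijection of `ℝ`. -/
noncomputable def pushUpOrderIso (hab : a ≤ b) (hr : 0 < r) : ℝ ≃o ℝ :=
  (strictMono_pushUp hab hr).orderIsoOfSurjective _ fun w =>
    mem_range_of_exists_le_of_exists_ge continuous_pushUp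
      ⟨w - (b - a), (pushUp_le hab hr _).trans_eq (by ring)⟩ ⟨w, le_pushUp w⟩

theorem pushUpOrderIso_apply (hab : a ≤ b) (hr : 0 < r) (z : ℝ) :
    pushUpOrderIso hab hr z = pushUp a b r z := rfl

end PushUp

section Column

variable {Y : Type*}

theorem continuous_of_abs_le {X : Type*} [TopologicalSpace X] {f u : X → ℝ} (hu : Continuous u)
    (hle : ∀ x, |f x| ≤ u x) (hf : ∀ x, u x ≠ 0 → ContinuousAt f x) : Continuous f := by
  refine continuous_iff_continuousAt.2 fun x => ?_
  by_cases hx : u x = 0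
  · have hfx : f x = 0 := abs_nonpos_iff.1 (hx ▸ hle x)
    rw [ContinuousAt, hfx]
    exact squeeze_zero_norm hle (hx ▸ hu.tendsto x)
  · exact hf x hx

theorem exists_continuous_pos_of_isClosed {X : Type*} [PseudoMetricSpace X] {C : Set X}
    (hC : IsClosed C) : ∃ ρ : X → ℝ, Continuous ρ ∧ (∀ x, 0 ≤ ρ x) ∧ (∀ x ∉ C, 0 < ρ x) ∧
      ∀ x, ∀ p ∈ C, ρ x ≤ dist x p := by
  rcases C.eq_empty_or_nonempty with rfl | hne
  · exact ⟨1, continuous_one, fun _ => zero_le_one, fun _ _ => one_pos, by simp⟩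
  · exact ⟨(infDist · C), continuous_infDist_pt C, fun _ => infDist_nonneg,
      fun x hx => (hC.notMem_iff_infDist_pos hne).1 hx, fun x p hp => infDist_le_dist_of_mem hp⟩

theorem exists_continuous_pushUp_family [TopologicalSpace Y] {a b r : Y → ℝ} (ha : Continuous a)
    (hb : Continuous b) (hr : Continuous r) (hpos : ∀ y, a y < b y → 0 < r y) :
    ∃ f : Y → ℝ ≃o ℝ, (Continuous fun p : Y × ℝ => f p.1 p.2) ∧
      (∀ y, a y < b y → ∀ z, f y z = pushUp (a y) (b y) (r y) z) ∧
      ∀ y, b y ≤ a y → ∀ z, f y z = z := by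
  let f y : ℝ ≃o ℝ := if h : a y < b y then pushUpOrderIso h.le (hpos y h) else OrderIso.refl ℝ
  have hlt : ∀ y, a y < b y → ∀ z, f y z = pushUp (a y) (b y) (r y) z := fun y h z => by
    simp only [f, dif_pos h, pushUpOrderIso_apply]
  have hge : ∀ y, b y ≤ a y → ∀ z, f y z = z := fun y h z => by
    simp only [f, dif_neg h.not_gt, OrderIso.refl_apply]
  have hle : ∀ p : Y × ℝ, |f p.1 p.2 - p.2| ≤ max (b p.1 - a p.1) 0 := fun p => by
    rcases lt_or_ge (a p.1) (b p.1) with h | h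
    · rw [hlt _ h, abs_of_nonneg (sub_nonneg.2 (le_pushUp _)), sub_le_iff_le_add']
      exact (pushUp_le h.le (hpos _ h) _).trans (by gcongr; exact le_max_left _ _)
    · simp [hge _ h]
  have hcont : Continuous fun p : Y × ℝ => f p.1 p.2 - p.2 := by
    refine continuous_of_abs_le (by fun_prop) hle fun p hp => ?_
    have hp' : a p.1 < b p.1 := by
      by_contra! h
      exact hp (max_eq_right (sub_nonpos.2 h))
    have hloc : ∀ᶠ q : Y × ℝ in 𝓝 p, a q.1 < b q.1 :=
      (isOpen_lt (by fun_prop) (by fun_prop)).mem_nhds hp'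
    have hr0 : r p.1 ≠ 0 := (hpos _ hp').ne'
    have hr1 : b p.1 - a p.1 + r p.1 ≠ 0 := by linarith [hpos _ hp']
    refine ContinuousAt.congr (f := fun q : Y × ℝ => pushUp (a q.1) (b q.1) (r q.1) q.2 - q.2) ?_
      (hloc.mono fun q hq => by simp only [hlt _ hq])
    unfold pushUp
    fun_prop (disch := assumption)
  exact ⟨f, (hcont.add continuous_snd).congr fun _ => sub_add_cancel _ _, hlt, hge⟩

theorem exists_isAmbientIsotopy_push [PseudoMetricSpace Y] {a b : Y → ℝ} (ha : Continuous a)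
    (hb : Continuous b) {C : Set (Y × ℝ)} (hC : IsClosed C)
    (hcol : ∀ y, a y < b y → ∀ z ∈ Icc (a y) (b y), (y, z) ∉ C) :
    ∃ H : ℝ → Y × ℝ ≃ₜ Y × ℝ, IsAmbientIsotopy H ∧ (∀ p ∈ C, H 1 p = p) ∧
      ∀ y, a y ≤ b y → H 1 (y, a y) = (y, b y) := by
  obtain ⟨ρ, hρ, -, hpos, hdist⟩ := exists_continuous_pos_of_isClosed hC
  let r y := min (ρ (y, a y)) (ρ (y, b y))
  have hr : ∀ y, a y < b y → 0 < r y := fun y h => lt_min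
    (hpos _ (hcol y h _ ⟨le_rfl, h.le⟩)) (hpos _ (hcol y h _ ⟨h.le, le_rfl⟩))
  obtain ⟨f, hf, hlt, hge⟩ := exists_continuous_pushUp_family ha hb (r := r) (by fun_prop) hr
  obtain ⟨H, hH, hH1⟩ := exists_isAmbientIsotopy_fiberwise f hf
  refine ⟨H, hH, fun ⟨y, z⟩ hp => ?_, fun y hy => ?_⟩
  · have hfix : f y z = z := by
      rcases lt_or_ge (a y) (b y) with h | h
      · have hra : r y ≤ |a y - z| := (min_le_left _ _).trans <| by
          simpa [Real.dist_eq] using hdist (y, a y) _ hp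
        have hrb : r y ≤ |b y - z| := (min_le_right _ _).trans <| by
          simpa [Real.dist_eq] using hdist (y, b y) _ hp
        rw [hlt y h]
        rcases lt_or_ge z (a y) with hz | hz
        · rw [abs_of_nonneg (by linarith)] at hra
          exact pushUp_of_le h.le (hr y h) (by linarith)
        · have hz' : b y < z := not_le.1 fun hz' => hcol y h z ⟨hz, hz'⟩ hp
          rw [abs_of_nonpos (by linarith)] at hrb
          exact pushUp_of_ge h.le (hr y h) (by linarith)
      · exact hge y h z
    rw [hH1, hfix]
  · rw [hH1]
    rcases hy.lt_or_eq with h | h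
    · rw [hlt y h, pushUp_self hy]
    · rw [hge y h.ge, h]

theorem exists_continuous_pos_iff_column_disjoint [PseudoMetricSpace Y] {a b : Y → ℝ}
    (ha : Continuous a) (hb : Continuous b) {C : Set (Y × ℝ)} (hC : IsClosed C) :
    ∃ r : Y → ℝ, Continuous r ∧ (∀ y, 0 ≤ r y) ∧
      ∀ y, a y ≤ b y → (0 < r y ↔ ∀ z ∈ Icc (a y) (b y), (y, z) ∉ C) := by
  obtain ⟨ρ, hρ, hρ0, hpos, hdist⟩ := exists_continuous_pos_of_isClosed hC
  let g y (s : ℝ) : ℝ := ρ (y, AffineMap.lineMap (a y) (b y) s)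
  have hg : Continuous ↿g := by
    simp only [g, AffineMap.lineMap_apply_ring, Function.HasUncurry.uncurry, id]
    fun_prop
  have hgy : ∀ y, Continuous (g y) := fun y => hg.comp (Continuous.prodMk_right y)
  have hmin : ∀ y, ∃ s ∈ Icc (0 : ℝ) 1, sInf (g y '' Icc 0 1) = g y s := fun y =>
    isCompact_Icc.exists_sInf_image_eq (nonempty_Icc.2 zero_le_one) (hgy y).continuousOn
  refine ⟨fun y => sInf (g y '' Icc 0 1), isCompact_Icc.continuous_sInf hg, fun y => ?_,
    fun y hab => ⟨fun h z hz hzC => ?_, fun h => ?_⟩⟩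
  · obtain ⟨s, -, hs⟩ := hmin y
    exact (hρ0 _).trans_eq hs.symm
  · rw [← segment_eq_Icc hab, segment_eq_image_lineMap] at hz
    obtain ⟨s, hs, rfl⟩ := hz
    have hbdd : BddBelow (g y '' Icc 0 1) := ⟨0, by rintro _ ⟨s, -, rfl⟩; exact hρ0 _⟩
    have hle : g y s ≤ 0 := (hdist _ _ hzC).trans_eq (dist_self _)
    exact (h.trans_le (csInf_le hbdd (mem_image_of_mem _ hs))).not_ge hle
  · obtain ⟨s, hs, hmin⟩ := hmin y
    refine (hpos _ (h _ ?_)).trans_eq hmin.symm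
    rw [← segment_eq_Icc hab, segment_eq_image_lineMap]
    exact mem_image_of_mem _ hs

theorem continuous_mul_div_add {X : Type*} [TopologicalSpace X] {u r σ : X → ℝ}
    (hu : Continuous u) (hr : Continuous r) (hσ : Continuous σ) (hr0 : ∀ x, 0 ≤ r x)
    (hσ0 : ∀ x, 0 ≤ σ x) (hpos : ∀ x, u x ≠ 0 → 0 < r x + σ x) :
    Continuous fun x => u x * (r x / (r x + σ x)) := by
  refine continuous_of_abs_le hu.abs (fun x => ?_) fun x hx => ?_
  · rw [abs_mul, abs_of_nonneg (div_nonneg (hr0 x) (add_nonneg (hr0 x) (hσ0 x)))]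
    exact mul_le_of_le_one_right (abs_nonneg _) <|
      div_le_one_of_le₀ (le_add_of_nonneg_right (hσ0 x)) (add_nonneg (hr0 x) (hσ0 x))
  · have hsum : r x + σ x ≠ 0 := (hpos x (abs_ne_zero.1 hx)).ne'
    fun_prop (disch := assumption)

/- The factor `r / (r + infDist · Z)` lowering the top is `1` on `Z`, and `0` over the columns that
meet `C`. -/
theorem exists_continuous_top_column_disjoint [PseudoMetricSpace Y] {a b : Y → ℝ}
    (ha : Continuous a) (hb : Continuous b) {C : Set (Y × ℝ)} (hC : IsClosed C) {Z : Set Y}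
    (hZ : IsClosed Z) (hne : Z.Nonempty)
    (hcol : ∀ y ∈ Z, a y < b y → ∀ z ∈ Icc (a y) (b y), (y, z) ∉ C) :
    ∃ b' : Y → ℝ, Continuous b' ∧ (∀ y ∈ Z, a y ≤ b y → b' y = b y) ∧
      ∀ y, a y < b' y → ∀ z ∈ Icc (a y) (b' y), (y, z) ∉ C := by
  obtain ⟨r, hr, hr0, hpos⟩ := exists_continuous_pos_iff_column_disjoint ha hb hC
  let σ y := infDist y Z
  have hσ0 : ∀ y, 0 ≤ σ y := fun y => infDist_nonneg
  let h y := max (b y - a y) 0 * (r y / (r y + σ y))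
  have hhle : ∀ y, h y ≤ max (b y - a y) 0 := fun y =>
    mul_le_of_le_one_right (le_max_right _ _) <|
      div_le_one_of_le₀ (le_add_of_nonneg_right (hσ0 y)) (add_nonneg (hr0 y) (hσ0 y))
  have hh : Continuous h := by
    refine continuous_mul_div_add (by fun_prop) hr (continuous_infDist_pt Z) hr0 hσ0 fun y hy => ?_
    have hab : a y < b y := by
      by_contra! hba
      exact hy (max_eq_right (sub_nonpos.2 hba))
    rcases (hσ0 y).lt_or_eq with hσ | hσ
    · exact add_pos_of_nonneg_of_pos (hr0 y) hσ
    · have hyZ : y ∈ Z := (hZ.mem_iff_infDist_zero hne).2 hσ.symm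
      exact add_pos_of_pos_of_nonneg ((hpos y hab.le).2 (hcol y hyZ hab)) (hσ0 y)
  refine ⟨fun y => a y + h y, ha.add hh, fun y hy hab => ?_, fun y hlt z hz => ?_⟩
  · rcases hab.lt_or_eq with hlt | heq
    · have hr : r y ≠ 0 := ((hpos y hab).2 (hcol y hy hlt)).ne'
      have hσ : σ y = 0 := infDist_zero_of_mem hy
      simp [h, hσ, hr, hab]
    · simp [h, heq]
  · have hh_pos : 0 < h y := by linarith
    have hab : 0 < b y - a y := by simpa using hh_pos.trans_le (hhle y)
    have hr : 0 < r y := (hr0 y).lt_of_ne' fun hr => by simp [h, hr] at hh_pos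
    have hle := hhle y
    rw [max_eq_left hab.le] at hle
    exact (hpos y (by linarith)).1 hr z ⟨hz.1, by linarith [hz.2]⟩

end Column

section Graph

variable {Y : Type*} (Z : Set Y) (a b : Y → ℝ)

/-- The part of `Y × ℝ` over `Z` enclosed between the graphs of `a` and `b`. -/
def columns : Set (Y × ℝ) := {p | p.1 ∈ Z ∧ p.2 ∈ Icc (a p.1) (b p.1)}

/-- The lower boundary of `columns Z a b`: the part of the graph of `a` over `Z` where `a ≤ b`. -/
def columnsBottom : Set (Y × ℝ) := {p ∈ columns Z a b | p.2 = a p.1}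

/-- The upper boundary of `columns Z a b`: the part of the graph of `b` over `Z` where `a ≤ b`. -/
def columnsTop : Set (Y × ℝ) := {p ∈ columns Z a b | p.2 = b p.1}

end Graph

section GraphPush

variable {Y H : Type*} [NormedAddCommGroup Y] [NormedSpace ℝ Y] {Z : Submodule ℝ Y}
  [NormedAddCommGroup H] [NormedSpace ℝ H] {a b : Y → ℝ}

theorem disjoint_columns_closure_diff_columnsBottom (hZ : Module.finrank ℝ Z = 2)
    (hH : Module.finrank ℝ H = 2) (ha : Continuous a) (hb : Continuous b) {K : Set (Y × ℝ)}
    (hK : IsClosed K) [ChartedSpace H K] (hKZ : K ∩ columns Z a b = columnsBottom Z a b) {y : Y}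
    (hy : y ∈ Z) (hab : a y < b y) {z : ℝ} (hz : z ∈ Icc (a y) (b y)) :
    (y, z) ∉ closure (K \ columnsBottom Z a b) := by
  let U : TopologicalSpace.Opens Z :=
    ⟨{y : Z | a y < b y}, isOpen_lt (by fun_prop) (by fun_prop)⟩
  let g (y : U) : Y × ℝ := ((y : Z), a (y : Z))
  have hgA : range g ⊆ columnsBottom Z a b := range_subset_iff.2 fun y =>
    ⟨⟨y.1.2, le_rfl, y.2.le⟩, rfl⟩
  have hAK : columnsBottom Z a b ⊆ K := hKZ ▸ inter_subset_left
  have hgK : ∀ y, g y ∈ K := fun y => hAK (hgA (mem_range_self y))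
  have hg : Continuous g := by fun_prop
  have hinj : Function.Injective (codRestrict g K hgK) := fun y y' h =>
    Subtype.ext (Subtype.ext (congrArg (fun p : K => p.1.1) h))
  have hdisj := disjoint_range_closure_diff_range hgK
    (isOpenMap_of_injective_of_finrank_eq_two hZ hH (hg.codRestrict hgK) hinj)
  intro hcl
  have hmem : (y, z) ∈ columnsBottom Z a b :=
    hKZ ▸ ⟨hK.closure_subset_iff.2 sdiff_subset hcl, hy, hz⟩
  obtain rfl : z = a y := hmem.2
  exact disjoint_left.1 hdisj ⟨⟨⟨y, hy⟩, hab⟩, rfl⟩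
    (closure_mono (sdiff_subset_sdiff_right hgA) hcl)

theorem exists_isAmbientIsotopy_columnsBottom (hZ : Module.finrank ℝ Z = 2)
    (hH : Module.finrank ℝ H = 2) (ha : Continuous a) (hb : Continuous b) {K : Set (Y × ℝ)}
    (hK : IsClosed K) [ChartedSpace H K] (hKZ : K ∩ columns Z a b = columnsBottom Z a b) :
    ∃ h : ℝ → Y × ℝ ≃ₜ Y × ℝ, IsAmbientIsotopy h ∧
      h 1 '' K = (K \ columnsBottom Z a b) ∪ columnsTop Z a b := by
  have : FiniteDimensional ℝ Z := Module.finite_of_finrank_pos (hZ ▸ two_pos)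
  have hAK : columnsBottom Z a b ⊆ K := hKZ ▸ inter_subset_left
  obtain ⟨b', hb', hbb', hcol⟩ := exists_continuous_top_column_disjoint ha hb
    (isClosed_closure (s := K \ columnsBottom Z a b)) Z.closed_of_finiteDimensional
    Z.nonempty fun y hy hab z hz =>
      disjoint_columns_closure_diff_columnsBottom hZ hH ha hb hK hKZ hy hab hz
  obtain ⟨h, hh, hfix, hpush⟩ := exists_isAmbientIsotopy_push ha hb' isClosed_closure hcol
  have hmove : ∀ y ∈ Z, a y ≤ b y → h 1 (y, a y) = (y, b y) := fun y hy hab => by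
    rw [hpush y (hab.trans_eq (hbb' y hy hab).symm), hbb' y hy hab]
  have himageA : h 1 '' columnsBottom Z a b = columnsTop Z a b := by
    ext ⟨y, z⟩
    constructor
    · rintro ⟨⟨y', z'⟩, ⟨⟨hy', hab⟩, hz'⟩, hp⟩
      obtain rfl : z' = a y' := hz'
      rw [hmove y' hy' hab.2] at hp
      exact hp ▸ ⟨⟨hy', hab.2, le_rfl⟩, rfl⟩
    · rintro ⟨⟨hy, hab⟩, hz⟩
      obtain rfl : z = b y := hz
      exact ⟨(y, a y), ⟨⟨hy, le_rfl, hab.1⟩, rfl⟩, hmove y hy hab.1⟩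
  refine ⟨h, hh, ?_⟩
  conv_lhs => rw [← sdiff_union_of_subset hAK]
  rw [image_union, himageA]
  congr 1
  exact EqOn.image_eq_self fun p hp => hfix p (subset_closure hp)

end GraphPush

end FiberwiseIsotopy

section Box

variable {ι : Type*}

/-- The signed axes along `S`, indexing the facets of `stdBox S`. -/
def facetIndex (S : Finset ι) : Finset (ι × ℤˣ) := S ×ˢ Finset.univ

/-- The box `[-1, 1]^S × {0}`, with one inequality for each of its facets. -/
def stdBox (S : Finset ι) : Set (ι → ℝ) :=
  {x | (∀ φ ∈ facetIndex S, φ.2 • x φ.1 ≤ 1) ∧ ∀ i ∉ S, x i = 0}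

/-- The facet of `stdBox S` on which the coordinate `φ.1` equals the sign `φ.2`. -/
def stdFacet (S : Finset ι) (φ : ι × ℤˣ) : Set (ι → ℝ) := {x ∈ stdBox S | φ.2 • x φ.1 = 1}

theorem mem_facetIndex {S : Finset ι} {φ : ι × ℤˣ} : φ ∈ facetIndex S ↔ φ.1 ∈ S := by
  simp only [facetIndex, Finset.mem_product, Finset.mem_univ, and_true]

theorem abs_units_smul_le_one_iff {η : ℤˣ} {t : ℝ} : |η • t| ≤ 1 ↔ ∀ ε : ℤˣ, ε • t ≤ 1 := by
  refine ⟨fun h ε => ?_, fun h => abs_le'.2 ⟨h η, by simpa using h (-η)⟩⟩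
  rcases eq_or_ne ε η with rfl | hε
  · exact (le_abs_self _).trans h
  · rw [Int.units_ne_iff_eq_neg.1 hε, Units.neg_smul]
    exact (neg_le_abs _).trans h

theorem mem_stdBox_iff [DecidableEq ι] {S : Finset ι} {x : ι → ℝ} :
    x ∈ stdBox S ↔ ∀ i, |x i| ≤ if i ∈ S then 1 else 0 := by
  refine ⟨fun h i => ?_, fun h => ⟨fun φ hφ => ?_, fun i hi => ?_⟩⟩
  · split_ifs with hi
    · rw [← one_smul ℤˣ (x i), abs_units_smul_le_one_iff]
      exact fun ε => h.1 (i, ε) (mem_facetIndex.2 hi)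
    · exact (abs_eq_zero.2 (h.2 i hi)).le
  · have hle := h φ.1
    rw [if_pos (mem_facetIndex.1 hφ), ← one_smul ℤˣ (x φ.1), abs_units_smul_le_one_iff] at hle
    exact hle φ.2
  · exact abs_nonpos_iff.1 ((h i).trans_eq (if_neg hi))

section Shear

variable (k : ι) (η : ℤˣ) (w : ι × ℤˣ → ℝ → ℝ)

/-- The homeomorphism separating the signed coordinate `z = η • x k` from the others, the remaining
coordinate `x j` being rescaled so that `[-1, 1]` becomes `[-w (j, -1) z, w (j, 1) z]`. -/
noncomputable def axisShear (hw : ∀ φ, Continuous (w φ)) (hpos : ∀ φ z, 0 < w φ z) :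
    (ι → ℝ) ≃ₜ ({j // j ≠ k} → ℝ) × ℝ where
  toFun x := (fun j => ((1 + x j) * w (j, 1) (η • x k) - (1 - x j) * w (j, -1) (η • x k)) / 2,
    η • x k)
  invFun p i := if h : i ≠ k then
    (2 * p.1 ⟨i, h⟩ - w (i, 1) p.2 + w (i, -1) p.2) / (w (i, 1) p.2 + w (i, -1) p.2) else η • p.2
  left_inv x := by
    ext i
    by_cases h : i = k
    · subst h
      simp [smul_smul]
    · have := (add_pos (hpos (i, 1) (η • x k)) (hpos (i, -1) (η • x k))).ne'
      simp only [ne_eq, h, not_false_eq_true, dif_pos]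
      field_simp
      ring
  right_inv p := by
    ext j
    · have := (add_pos (hpos (j, 1) p.2) (hpos (j, -1) p.2)).ne'
      simp only [j.2, ne_eq, not_false_eq_true, dif_pos, not_true_eq_false, dif_neg, smul_smul,
        Int.units_mul_self, one_smul, Subtype.coe_eta]
      field_simp
      ring
    · simp [smul_smul]
  continuous_toFun := by fun_prop
  continuous_invFun := by
    refine continuous_pi fun i => ?_
    by_cases h : i = k
    · simp only [ne_eq, h, not_true_eq_false, dif_neg, not_false_eq_true]
      fun_prop
    · have := fun p : ({j // j ≠ k} → ℝ) × ℝ =>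
        (add_pos (hpos (i, 1) p.2) (hpos (i, -1) p.2)).ne'
      simp only [ne_eq, h, not_false_eq_true, dif_pos]
      fun_prop (disch := assumption)

theorem axisShear_slack (hw : ∀ φ, Continuous (w φ)) (hpos : ∀ φ z, 0 < w φ z) (x : ι → ℝ)
    (j : {j // j ≠ k}) (ε : ℤˣ) :
    w (j, ε) (η • x k) - ε • (axisShear k η w hw hpos x).1 j =
      (w (j, 1) (η • x k) + w (j, -1) (η • x k)) / 2 * (1 - ε • x j) := by
  rcases Int.units_eq_one_or ε with rfl | rfl
  · simp only [axisShear, Homeomorph.homeomorph_mk_coe, Equiv.coe_fn_mk, one_smul]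
    ring
  · simp only [axisShear, Homeomorph.homeomorph_mk_coe, Equiv.coe_fn_mk, Units.neg_smul, one_smul]
    ring

end Shear

section Straighten

variable (T : Finset (ι × ℤˣ)) (k : ι)

/-- The sign telling whether a facet belongs to the family `T`, to become the bottom of the box, or
to the complementary family, to become its top. -/
noncomputable def facetSign (φ : ι × ℤˣ) : ℝ := if φ ∈ T then 1 else -1

/-- The position, at height `z` in the direction of the axis, of the sheared facet `φ`. The facets
of `T` move outwards as `z` grows and the others move inwards. -/
noncomputable def facetOffset (φ : ι × ℤˣ) (z : ℝ) : ℝ := 2 + facetSign T φ * max (-1) (min z 1)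

/-- The function of which the sheared facet `φ` is the graph in the direction of the axis `k`. -/
noncomputable def facetHeight (φ : ι × ℤˣ) (y : {j // j ≠ k} → ℝ) : ℝ :=
  facetSign T φ * if h : φ.1 ≠ k then φ.2 • y ⟨φ.1, h⟩ - 2 else -1

variable {T k}

theorem facetSign_of_mem {φ : ι × ℤˣ} (h : φ ∈ T) : facetSign T φ = 1 := if_pos h

theorem facetSign_of_notMem {φ : ι × ℤˣ} (h : φ ∉ T) : facetSign T φ = -1 := if_neg h

theorem facetOffset_pos (φ : ι × ℤˣ) (z : ℝ) : 0 < facetOffset T φ z := by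
  have hlow : (-1 : ℝ) ≤ max (-1) (min z 1) := le_max_left _ _
  have hupp : max (-1) (min z 1) ≤ (1 : ℝ) := max_le (by norm_num) (min_le_right _ _)
  rw [facetOffset, facetSign]
  split_ifs <;> linarith

theorem facetOffset_of_abs_le {z : ℝ} (hz : |z| ≤ 1) (φ : ι × ℤˣ) :
    facetOffset T φ z = 2 + facetSign T φ * z := by
  rw [facetOffset, min_eq_left (abs_le.1 hz).2, max_eq_right (abs_le.1 hz).1]

theorem continuous_facetOffset (φ : ι × ℤˣ) : Continuous (facetOffset T φ) := by
  unfold facetOffset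
  fun_prop

theorem continuous_facetHeight (φ : ι × ℤˣ) : Continuous (facetHeight T k φ) := by
  unfold facetHeight
  by_cases h : φ.1 ≠ k
  · simp only [dif_pos h]
    fun_prop
  · simp only [dif_neg h]
    fun_prop

/-- The coordinate change in which the facets of `stdBox S` belonging to `T` lie below the others in
the direction of the signed axis `(k, η)`. -/
noncomputable def facetShear (T : Finset (ι × ℤˣ)) (k : ι) (η : ℤˣ) :
    (ι → ℝ) ≃ₜ ({j // j ≠ k} → ℝ) × ℝ :=
  axisShear k η (facetOffset T) continuous_facetOffset facetOffset_pos

variable {η : ℤˣ}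

theorem facetShear_snd (x : ι → ℝ) : (facetShear T k η x).2 = η • x k := rfl

theorem facetSign_mul_self (φ : ι × ℤˣ) : facetSign T φ * facetSign T φ = 1 := by
  rw [facetSign]
  split_ifs <;> norm_num

theorem facetSign_mul_sub_facetHeight (φ : ι × ℤˣ) (y : {j // j ≠ k} → ℝ) (z : ℝ) :
    facetSign T φ * (z - facetHeight T k φ y) =
      facetSign T φ * z - if h : φ.1 ≠ k then φ.2 • y ⟨φ.1, h⟩ - 2 else -1 := by
  rw [facetHeight, mul_sub, ← mul_assoc, facetSign_mul_self, one_mul]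

theorem facetSign_mul_sub_facetHeight_axis (hη : (k, η) ∉ T) (hη' : (k, -η) ∈ T) (x : ι → ℝ)
    (ε : ℤˣ) :
    facetSign T (k, ε) * (η • x k - facetHeight T k (k, ε) (facetShear T k η x).1) =
      1 - ε • x k := by
  have hsign : facetSign T (k, ε) • η • x k = -(ε • x k) := by
    rcases eq_or_ne ε η with rfl | h
    · rw [facetSign_of_notMem hη, neg_one_smul]
    · rw [Int.units_ne_iff_eq_neg.1 h, facetSign_of_mem hη', one_smul, Units.neg_smul, neg_neg]
  rw [facetSign_mul_sub_facetHeight, dif_neg (not_not.2 rfl), ← smul_eq_mul, hsign]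
  ring

theorem exists_pos_facetSign_mul_sub_facetHeight (hη : (k, η) ∉ T) (hη' : (k, -η) ∈ T)
    {x : ι → ℝ} (hx : |η • x k| ≤ 1) (φ : ι × ℤˣ) :
    ∃ c > 0, facetSign T φ * (η • x k - facetHeight T k φ (facetShear T k η x).1) =
      c * (1 - φ.2 • x φ.1) := by
  obtain ⟨i, ε⟩ := φ
  by_cases h : i = k
  · subst h
    exact ⟨1, one_pos, by rw [facetSign_mul_sub_facetHeight_axis hη hη', one_mul]⟩
  · refine ⟨_, half_pos (add_pos (facetOffset_pos (T := T) (i, 1) (η • x k))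
      (facetOffset_pos (T := T) (i, -1) (η • x k))), ?_⟩
    rw [← axisShear_slack k η (facetOffset T) continuous_facetOffset facetOffset_pos x ⟨i, h⟩,
      facetOffset_of_abs_le hx, facetSign_mul_sub_facetHeight, dif_pos h]
    simp only [facetShear]
    ring

theorem forall_smul_le_one_iff_forall_facetSign_mul {S : Finset ι} (hk : k ∈ S) (hη : (k, η) ∉ T)
    (hη' : (k, -η) ∈ T) (x : ι → ℝ) :
    (∀ φ ∈ facetIndex S, φ.2 • x φ.1 ≤ 1) ↔ ∀ φ ∈ facetIndex S,
      0 ≤ facetSign T φ * (η • x k - facetHeight T k φ (facetShear T k η x).1) := by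
  have hslab (h : |η • x k| ≤ 1) (φ : ι × ℤˣ) : φ.2 • x φ.1 ≤ 1 ↔
      0 ≤ facetSign T φ * (η • x k - facetHeight T k φ (facetShear T k η x).1) := by
    obtain ⟨c, hc, heq⟩ := exists_pos_facetSign_mul_sub_facetHeight hη hη' h φ
    rw [heq, mul_nonneg_iff_of_pos_left hc, sub_nonneg]
  have hk' (ε : ℤˣ) : (k, ε) ∈ facetIndex S := mem_facetIndex.2 hk
  refine ⟨fun h φ hφ => ?_, fun h φ hφ => ?_⟩
  · exact (hslab (abs_units_smul_le_one_iff.2 fun ε => h _ (hk' ε)) φ).1 (h φ hφ)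
  · refine (hslab (abs_units_smul_le_one_iff.2 fun ε => ?_) φ).2 (h φ hφ)
    exact sub_nonneg.1 ((h _ (hk' ε)).trans_eq (facetSign_mul_sub_facetHeight_axis hη hη' x ε))

theorem eq_facetHeight_iff (hη : (k, η) ∉ T) (hη' : (k, -η) ∈ T) {x : ι → ℝ}
    (hx : |η • x k| ≤ 1) (φ : ι × ℤˣ) :
    η • x k = facetHeight T k φ (facetShear T k η x).1 ↔ φ.2 • x φ.1 = 1 := by
  obtain ⟨c, hc, heq⟩ := exists_pos_facetSign_mul_sub_facetHeight hη hη' hx φ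
  have hsign : facetSign T φ ≠ 0 := left_ne_zero_of_mul_eq_one (facetSign_mul_self φ)
  rw [← sub_eq_zero, ← mul_eq_zero_iff_left hsign, heq, mul_eq_zero_iff_left hc.ne', sub_eq_zero,
    eq_comm]

theorem facetShear_fst_eq_zero_iff {j : {j // j ≠ k}} (hj : ∀ ε, (↑j, ε) ∉ T) (x : ι → ℝ) :
    (facetShear T k η x).1 j = 0 ↔ x j = 0 := by
  have hpos := facetOffset_pos (T := T) (j, 1) (η • x k)
  have heq : (facetShear T k η x).1 j = x j * facetOffset T (j, 1) (η • x k) := by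
    have hw : facetOffset T (j, -1) (η • x k) = facetOffset T (j, 1) (η • x k) := by
      simp only [facetOffset, facetSign_of_notMem (hj _)]
    have := axisShear_slack k η (facetOffset T) continuous_facetOffset facetOffset_pos x j 1
    rw [hw, one_smul, one_smul] at this
    simp only [facetShear]
    linarith
  rw [heq, mul_eq_zero_iff_right hpos.ne']

/-- The subspace of the space of coordinates other than `k` spanned by those in `S`. -/
def coordSubspace (S : Finset ι) (k : ι) : Submodule ℝ ({j // j ≠ k} → ℝ) :=
  ⨅ j ∈ {j : {j // j ≠ k} | ↑j ∉ S}, LinearMap.ker (LinearMap.proj j)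

theorem mem_coordSubspace {S : Finset ι} {y : {j // j ≠ k} → ℝ} :
    y ∈ coordSubspace S k ↔ ∀ j : {j // j ≠ k}, ↑j ∉ S → y j = 0 := by
  simp [coordSubspace, Submodule.mem_iInf]

theorem finrank_coordSubspace [DecidableEq ι] (S : Finset ι) (k : ι) :
    Module.finrank ℝ (coordSubspace S k) = (S.erase k).card := by
  let I := S.subtype (· ≠ k)
  have e := LinearMap.iInfKerProjEquiv ℝ (fun _ : {j // j ≠ k} => ℝ) (I := ↑I)
    (J := {j | ↑j ∉ S}) (disjoint_left.2 fun j h h' => h' (Finset.mem_subtype.1 h))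
    fun j _ => (em (↑j ∈ S)).imp_left Finset.mem_subtype.2
  rw [coordSubspace, e.finrank_eq, Module.finrank_fintype_fun_eq_card]
  simp only [I, SetLike.coe_sort_coe, Fintype.card_coe, Finset.card_subtype, Finset.filter_ne']

theorem facetShear_fst_mem_coordSubspace_iff {S : Finset ι} (hT : T ⊆ facetIndex S) (hk : k ∈ S)
    (x : ι → ℝ) :
    (facetShear T k η x).1 ∈ coordSubspace S k ↔ ∀ i ∉ S, x i = 0 := by
  have hS {j : {j // j ≠ k}} (hj : ↑j ∉ S) : (facetShear T k η x).1 j = 0 ↔ x j = 0 :=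
    facetShear_fst_eq_zero_iff (fun ε h => hj (mem_facetIndex.1 (hT h))) x
  rw [mem_coordSubspace]
  exact ⟨fun h i hi => (hS hi).1 (h ⟨i, fun hik => hi (hik ▸ hk)⟩ hi),
    fun h j hj => (hS hj).2 (h j hj)⟩

theorem mem_stdBox_iff_facetHeight [DecidableEq ι] {S : Finset ι} (hT : T ⊆ facetIndex S)
    (hη : (k, η) ∉ T) (hη' : (k, -η) ∈ T) (x : ι → ℝ) :
    x ∈ stdBox S ↔ (facetShear T k η x).1 ∈ coordSubspace S k ∧
      (∀ φ ∈ T, facetHeight T k φ (facetShear T k η x).1 ≤ η • x k) ∧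
      ∀ φ ∈ facetIndex S \ T, η • x k ≤ facetHeight T k φ (facetShear T k η x).1 := by
  have hk : k ∈ S := mem_facetIndex.1 (hT hη')
  rw [facetShear_fst_mem_coordSubspace_iff hT hk, and_comm (a := ∀ i ∉ S, x i = 0), stdBox,
    mem_ofPred_eq, forall_smul_le_one_iff_forall_facetSign_mul hk hη hη']
  refine and_congr_left fun _ => ⟨fun h => ⟨fun φ hφ => ?_, fun φ hφ => ?_⟩, fun h φ hφ => ?_⟩
  · simpa [facetSign_of_mem hφ] using h φ (hT hφ)
  · obtain ⟨hφ, hφT⟩ := Finset.mem_sdiff.1 hφ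
    simpa [facetSign_of_notMem hφT] using h φ hφ
  · by_cases hφT : φ ∈ T
    · simpa [facetSign_of_mem hφT] using h.1 φ hφT
    · simpa [facetSign_of_notMem hφT] using h.2 φ (Finset.mem_sdiff.2 ⟨hφ, hφT⟩)

theorem mem_stdFacet_iff_facetHeight {S : Finset ι} (hk : k ∈ S) (hη : (k, η) ∉ T)
    (hη' : (k, -η) ∈ T) {x : ι → ℝ} (φ : ι × ℤˣ) :
    x ∈ stdFacet S φ ↔ x ∈ stdBox S ∧ η • x k = facetHeight T k φ (facetShear T k η x).1 :=
  and_congr_right fun hx => (eq_facetHeight_iff hη hη'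
    (abs_units_smul_le_one_iff.2 fun ε => hx.1 (k, ε) (mem_facetIndex.2 hk)) φ).symm

theorem eq_sup'_iff_of_forall_le {α β : Type*} [LinearOrder α] {s : Finset β} (hs : s.Nonempty)
    {f : β → α} {c : α} (hc : ∀ i ∈ s, f i ≤ c) : c = s.sup' hs f ↔ ∃ i ∈ s, c = f i := by
  refine ⟨fun h => ?_, fun ⟨i, hi, h⟩ => (h.trans_le (s.le_sup' f hi)).antisymm (s.sup'_le hs f hc)⟩
  obtain ⟨i, hi, hsup⟩ := s.exists_mem_eq_sup' hs f
  exact ⟨i, hi, h.trans hsup⟩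

theorem eq_inf'_iff_of_forall_ge {α β : Type*} [LinearOrder α] {s : Finset β} (hs : s.Nonempty)
    {f : β → α} {c : α} (hc : ∀ i ∈ s, c ≤ f i) : c = s.inf' hs f ↔ ∃ i ∈ s, c = f i :=
  eq_sup'_iff_of_forall_le (α := αᵒᵈ) hs hc

theorem exists_homeomorph_stdBox_columns [DecidableEq ι] {S : Finset ι} (hT : T ⊆ facetIndex S)
    (hη : (k, η) ∉ T) (hη' : (k, -η) ∈ T) :
    ∃ (Ψ : (ι → ℝ) ≃ₜ ({j // j ≠ k} → ℝ) × ℝ) (a b : ({j // j ≠ k} → ℝ) → ℝ),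
      Continuous a ∧ Continuous b ∧ stdBox S = Ψ ⁻¹' columns (coordSubspace S k) a b ∧
      ⋃ φ ∈ T, stdFacet S φ = Ψ ⁻¹' columnsBottom (coordSubspace S k) a b ∧
      ⋃ φ ∈ facetIndex S \ T, stdFacet S φ = Ψ ⁻¹' columnsTop (coordSubspace S k) a b := by
  have hk : k ∈ S := mem_facetIndex.1 (hT hη')
  have hne : T.Nonempty := ⟨_, hη'⟩
  have hne' : (facetIndex S \ T).Nonempty :=
    ⟨(k, η), Finset.mem_sdiff.2 ⟨mem_facetIndex.2 hk, hη⟩⟩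
  let a y := T.sup' hne fun φ => facetHeight T k φ y
  let b y := (facetIndex S \ T).inf' hne' fun φ => facetHeight T k φ y
  have hbox (x : ι → ℝ) : x ∈ stdBox S ↔
      facetShear T k η x ∈ columns (coordSubspace S k) a b := by
    rw [mem_stdBox_iff_facetHeight hT hη hη']
    simp only [columns, mem_ofPred_eq, mem_Icc, a, b, Finset.sup'_le_iff, Finset.le_inf'_iff,
      facetShear_snd, SetLike.mem_coe]
  refine ⟨facetShear T k η, a, b,
    Continuous.finset_sup'_apply hne fun φ _ => continuous_facetHeight φ,
    Continuous.finset_inf'_apply hne' fun φ _ => continuous_facetHeight φ, ext hbox, ?_, ?_⟩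
  all_goals
    ext x
    simp only [mem_iUnion, exists_prop, mem_stdFacet_iff_facetHeight hk hη hη',
      and_left_comm (b := x ∈ stdBox S), exists_and_left]
    refine (and_congr_right fun hx => ?_).trans (and_congr_left' (hbox x))
  · exact (eq_sup'_iff_of_forall_le hne ((mem_stdBox_iff_facetHeight hT hη hη' x).1 hx).2.1).symm
  · exact (eq_inf'_iff_of_forall_ge hne' ((mem_stdBox_iff_facetHeight hT hη hη' x).1 hx).2.2).symm

end Straighten

theorem units_smul_units_smul_one (ε δ : ℤˣ) :
    ε • δ • (1 : ℝ) = if ε = δ then 1 else -1 := by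
  split_ifs with h
  · rw [h, smul_smul, Int.units_mul_self, one_smul]
  · rw [Int.units_ne_iff_eq_neg.1 h, Units.neg_smul, smul_smul, Int.units_mul_self, one_smul]

theorem single_mem_stdFacet_iff [DecidableEq ι] {S : Finset ι} {i : ι} (hi : i ∈ S) {δ : ℤˣ}
    {φ : ι × ℤˣ} : Pi.single i (δ • (1 : ℝ)) ∈ stdFacet S φ ↔ φ = (i, δ) := by
  have hvalue (φ : ι × ℤˣ) : φ.2 • (Pi.single i (δ • (1 : ℝ)) : ι → ℝ) φ.1 =
      if φ.1 = i then if φ.2 = δ then 1 else -1 else 0 := by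
    rw [Pi.single_apply, smul_ite, units_smul_units_smul_one, smul_zero]
  have hbox : Pi.single i (δ • (1 : ℝ)) ∈ stdBox S := by
    refine ⟨fun φ _ => ?_, fun j hj => Pi.single_eq_of_ne (ne_of_mem_of_not_mem hi hj).symm _⟩
    rw [hvalue]
    split_ifs <;> norm_num
  rw [stdFacet, mem_ofPred_eq, and_iff_right hbox, hvalue, Prod.ext_iff]
  split_ifs <;> norm_num [*]

theorem exists_mem_neg_notMem_of_isPreconnected {S : Finset ι} {T : Finset (ι × ℤˣ)}
    (hT : T ⊆ facetIndex S) (hne : T.Nonempty) (hcard : T.card ≤ 3)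
    (hconn : IsPreconnected (⋃ φ ∈ T, stdFacet S φ)) :
    ∃ k η, (k, η) ∉ T ∧ (k, -η) ∈ T := by
  by_contra! hanti
  obtain ⟨⟨i, ε⟩, hi⟩ := hne
  have hall {j : ι} {ε : ℤˣ} (hj : (j, ε) ∈ T) (δ : ℤˣ) : (j, δ) ∈ T := by
    by_contra hδ
    rcases eq_or_ne ε δ with rfl | h
    · exact hδ hj
    · exact hanti j δ hδ (Int.units_ne_iff_eq_neg.1 h ▸ hj)
  have honly : ∀ φ ∈ T, φ.1 = i := by
    rintro ⟨j, δ⟩ hj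
    by_contra hji
    have hsub : ({i, j} : Finset ι) ×ˢ Finset.univ ⊆ T := by
      rintro ⟨l, γ⟩ hl
      have hl : l = i ∨ l = j := by
        simpa using (Finset.mem_product.1 hl).1
      rcases hl with rfl | rfl
      exacts [hall hi γ, hall hj γ]
    have := (Finset.card_le_card hsub).trans hcard
    rw [Finset.card_product, Finset.card_pair (Ne.symm hji)] at this
    exact absurd this (by decide)
  have hmem (δ : ℤˣ) : Pi.single i (δ • (1 : ℝ)) ∈ ⋃ φ ∈ T, stdFacet S φ :=
    mem_iUnion₂.2 ⟨(i, δ), hall hi δ, (single_mem_stdFacet_iff (mem_facetIndex.1 (hT hi))).2 rfl⟩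
  have hzero := hconn.intermediate_value (hmem (-1)) (hmem 1) (continuous_apply i).continuousOn
  obtain ⟨x, hx, hxi⟩ := hzero (show (0 : ℝ) ∈ _ by simp)
  obtain ⟨φ, hφ, hxφ⟩ := mem_iUnion₂.1 hx
  have := hxφ.2
  simp [honly φ hφ, hxi] at this

end Box

section Cube

variable {n m : ℕ}

/-- The integral vertex of the cell `sFace n m v S` opposite to `v`. -/
def faceTop (v : Fin n → ℤ) (S : Finset (Fin n)) (i : Fin n) : ℤ := v i + if i ∈ S then 1 else 0

/-- The affine coordinates in which the cell `sFace n m v S` becomes `stdBox S`. -/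
noncomputable def cubeCoord (hm : 0 < m) (v : Fin n → ℤ) (S : Finset (Fin n)) :
    (Fin n → ℝ) ≃ₜ (Fin n → ℝ) :=
  Homeomorph.piCongrRight fun i =>
    affineHomeomorph (2 * m : ℝ) (-(v i + faceTop v S i)) (by positivity)

theorem cubeCoord_apply (hm : 0 < m) (v : Fin n → ℤ) (S : Finset (Fin n)) (x : Fin n → ℝ)
    (i : Fin n) : cubeCoord hm v S x i = 2 * m * x i - (v i + faceTop v S i) := rfl

theorem faceTop_sub (v : Fin n → ℤ) (S : Finset (Fin n)) (i : Fin n) :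
    (faceTop v S i - v i : ℝ) = if i ∈ S then 1 else 0 := by
  simp [faceTop]

theorem mem_sFace_iff (hm : 0 < m) {v : Fin n → ℤ} {S : Finset (Fin n)} {x : Fin n → ℝ} :
    x ∈ sFace n m v S ↔ ∀ i, m * x i ∈ Icc (v i : ℝ) (faceTop v S i) := by
  have hm' : (0 : ℝ) < m := Nat.cast_pos.2 hm
  refine forall_congr' fun i => ?_
  by_cases hi : i ∈ S
  · simp [hi, faceTop, div_le_iff₀ hm', le_div_iff₀ hm', mul_comm]
  · simp [hi, faceTop, eq_div_iff hm'.ne', mul_comm]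

theorem sFace_subset_sFace_iff (hm : 0 < m) {v w : Fin n → ℤ} {S R : Finset (Fin n)} :
    sFace n m w R ⊆ sFace n m v S ↔ ∀ i, v i ≤ w i ∧ faceTop w R i ≤ faceTop v S i := by
  have hm' : (m : ℝ) ≠ 0 := (Nat.cast_pos.2 hm).ne'
  have hle (i : Fin n) : (w i : ℝ) ≤ faceTop w R i := by
    rw [faceTop]
    split_ifs <;> simp
  refine ⟨fun h i => ?_, fun h x hx => (mem_sFace_iff hm).2 fun i => ?_⟩
  · have hlow : (fun i => w i / m : Fin n → ℝ) ∈ _ := h ((mem_sFace_iff hm).2 fun i => by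
      rw [mul_div_cancel₀ _ hm']; exact ⟨le_rfl, hle i⟩)
    have hupp : (fun i => faceTop w R i / m : Fin n → ℝ) ∈ _ := h ((mem_sFace_iff hm).2 fun i => by
      rw [mul_div_cancel₀ _ hm']; exact ⟨hle i, le_rfl⟩)
    have hlow := ((mem_sFace_iff hm).1 hlow i).1
    have hupp := ((mem_sFace_iff hm).1 hupp i).2
    rw [mul_div_cancel₀ _ hm'] at hlow hupp
    exact_mod_cast And.intro hlow hupp
  · exact Icc_subset_Icc (Int.cast_le.2 (h i).1) (Int.cast_le.2 (h i).2) ((mem_sFace_iff hm).1 hx i)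

theorem sFace_eq_preimage_stdBox (hm : 0 < m) (v : Fin n → ℤ) (S : Finset (Fin n)) :
    sFace n m v S = cubeCoord hm v S ⁻¹' stdBox S := by
  ext x
  rw [mem_sFace_iff hm, mem_preimage, mem_stdBox_iff]
  refine forall_congr' fun i => ?_
  rw [cubeCoord_apply, ← faceTop_sub v, abs_le, mem_Icc]
  constructor <;> rintro ⟨hlow, hupp⟩ <;> constructor <;> linarith

/-- The facet of the cell `sFace n m v S` in the signed direction `φ`. -/
def cubeFacet (hm : 0 < m) (v : Fin n → ℤ) (S : Finset (Fin n)) (φ : Fin n × ℤˣ) :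
    Set (Fin n → ℝ) := cubeCoord hm v S ⁻¹' stdFacet S φ

/-- The least vertex of the facet of `sFace n m v S` in the signed direction `φ`. -/
def facetVertex (v : Fin n → ℤ) (φ : Fin n × ℤˣ) : Fin n → ℤ :=
  Function.update v φ.1 (if φ.2 = 1 then v φ.1 + 1 else v φ.1)

theorem cubeFacet_eq_sFace (hm : 0 < m) (v : Fin n → ℤ) (S : Finset (Fin n)) (φ : Fin n × ℤˣ)
    (hφ : φ ∈ facetIndex S) :
    cubeFacet hm v S φ = sFace n m (facetVertex v φ) (S.erase φ.1) := by
  obtain ⟨i, ε⟩ := φ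
  have hi : i ∈ S := mem_facetIndex.1 hφ
  have hother {j : Fin n} (hj : j ≠ i) : facetVertex v (i, ε) j = v j ∧
      faceTop (facetVertex v (i, ε)) (S.erase i) j = faceTop v S j := by
    simp [faceTop, facetVertex, hj]
  ext x
  have hfacet : ε • cubeCoord hm v S x i = 1 ↔ m * x i = facetVertex v (i, ε) i := by
    rw [cubeCoord_apply]
    rcases Int.units_eq_one_or ε with rfl | rfl <;>
      simp only [facetVertex, faceTop, hi, Function.update_self, neg_units_ne_self, Units.neg_smul,
        one_smul, if_true, if_false] <;>
      push_cast <;> constructor <;> intro h <;> linarith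
  have hself : m * x i ∈ Icc (facetVertex v (i, ε) i : ℝ)
      (faceTop (facetVertex v (i, ε)) (S.erase i) i) ↔ m * x i = facetVertex v (i, ε) i := by
    simp [faceTop]
  have hmem : (facetVertex v (i, ε) i : ℝ) ∈ Icc (v i : ℝ) (faceTop v S i) := by
    rcases Int.units_eq_one_or ε with rfl | rfl <;> simp [facetVertex, faceTop, hi]
  suffices ((∀ j, m * x j ∈ Icc (v j : ℝ) (faceTop v S j)) ∧ m * x i = facetVertex v (i, ε) i) ↔
      ∀ j, m * x j ∈ Icc (facetVertex v (i, ε) j : ℝ)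
        (faceTop (facetVertex v (i, ε)) (S.erase i) j) by
    rwa [← mem_sFace_iff hm, ← mem_sFace_iff hm, ← hfacet, sFace_eq_preimage_stdBox hm] at this
  rw [← hself]
  refine ⟨fun h j => ?_, fun h => ⟨fun j => ?_, h i⟩⟩ <;> rcases eq_or_ne j i with rfl | hj
  · exact h.2
  · rw [(hother hj).1, (hother hj).2]
    exact h.1 j
  · exact hself.1 (h j) ▸ hmem
  · rw [← (hother hj).1, ← (hother hj).2]
    exact h j

theorem exists_eq_facetVertex_of_sFace_subset (hm : 0 < m) {v w : Fin n → ℤ} {R : Finset (Fin n)}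
    {i : Fin n} (hi : i ∉ R) (h : sFace n m w R ⊆ sFace n m v (insert i R)) :
    ∃ ε, w = facetVertex v (i, ε) := by
  have hle := (sFace_subset_sFace_iff hm).1 h
  have hother : ∀ j ≠ i, w j = v j := fun j hj => by
    have := hle j
    simp only [faceTop, Finset.mem_insert, hj, false_or, add_le_add_iff_right] at this
    exact this.2.antisymm this.1
  have hwi : w i = v i + 1 ∨ w i = v i := by
    have := hle i
    simp only [faceTop, hi, Finset.mem_insert_self, if_true, if_false] at this
    omega
  refine hwi.elim (fun hwi => ⟨1, funext fun j => ?_⟩) fun hwi => ⟨-1, funext fun j => ?_⟩ <;>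
    rcases eq_or_ne j i with rfl | hj <;> simp [facetVertex, *]

theorem mem_sFaces_and_subset_sFace_iff (hm : 0 < m) {v : Fin n → ℤ} {S : Finset (Fin n)} {d : ℕ}
    (hS : S.card = d + 1) {G : Set (Fin n → ℝ)} :
    G ∈ sFaces n m d ∧ G ⊆ sFace n m v S ↔ G ∈ cubeFacet hm v S '' facetIndex S := by
  constructor
  · rintro ⟨⟨w, R, hR, rfl⟩, hsub⟩
    have hRS : R ⊆ S := fun j hj => by
      by_contra hjS
      have := (sFace_subset_sFace_iff hm).1 hsub j
      simp only [faceTop, hj, hjS, if_true, if_false] at this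
      omega
    obtain ⟨i, hi, rfl⟩ := Finset.exists_eq_insert_iff.2 ⟨hRS, by rw [hR, hS]⟩
    obtain ⟨ε, rfl⟩ := exists_eq_facetVertex_of_sFace_subset hm hi hsub
    have hφ : (i, ε) ∈ facetIndex (insert i R) := mem_facetIndex.2 (Finset.mem_insert_self i R)
    exact ⟨(i, ε), hφ, by rw [cubeFacet_eq_sFace hm v _ _ hφ, Finset.erase_insert hi]⟩
  · rintro ⟨φ, hφ, rfl⟩
    refine ⟨⟨_, _, ?_, cubeFacet_eq_sFace hm v S φ hφ⟩, ?_⟩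
    · rw [Finset.card_erase_of_mem (mem_facetIndex.1 hφ), hS, Nat.add_sub_cancel]
    · rw [sFace_eq_preimage_stdBox hm]
      exact preimage_mono fun x hx => hx.1

theorem injOn_cubeFacet (hm : 0 < m) (v : Fin n → ℤ) (S : Finset (Fin n)) :
    InjOn (cubeFacet hm v S) (facetIndex S) := fun φ hφ φ' _ h => by
  have hφ' : φ.1 ∈ S := mem_facetIndex.1 hφ
  have hstd : stdFacet S φ = stdFacet S φ' := (cubeCoord hm v S).surjective.preimage_injective h
  exact ((single_mem_stdFacet_iff hφ').1 (hstd ▸ (single_mem_stdFacet_iff hφ').2 rfl)).symm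

end Cube

section Move

variable {n m d : ℕ} {v : Fin n → ℤ} {S : Finset (Fin n)}

theorem sUnion_image_cubeFacet (hm : 0 < m) (T : Finset (Fin n × ℤˣ)) :
    ⋃₀ (cubeFacet hm v S '' T) = cubeCoord hm v S ⁻¹' ⋃ φ ∈ T, stdFacet S φ := by
  simp only [sUnion_image, Finset.mem_coe, preimage_iUnion, cubeFacet]

theorem exists_homeomorph_sFace_columns (hm : 0 < m) (hS : S.card = d + 1)
    {𝒜 : Set (Set (Fin n → ℝ))} (h𝒜 : 𝒜 ⊆ {G ∈ sFaces n m d | G ⊆ sFace n m v S})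
    (hne : 𝒜.Nonempty) (hcard : 𝒜.ncard ≤ 3) (hconn : IsPreconnected (⋃₀ 𝒜)) :
    ∃ k ∈ S, ∃ (Ψ : (Fin n → ℝ) ≃ₜ ({j // j ≠ k} → ℝ) × ℝ) (a b : ({j // j ≠ k} → ℝ) → ℝ),
      Continuous a ∧ Continuous b ∧ sFace n m v S = Ψ ⁻¹' columns (coordSubspace S k) a b ∧
      ⋃₀ 𝒜 = Ψ ⁻¹' columnsBottom (coordSubspace S k) a b ∧
      ⋃₀ ({G ∈ sFaces n m d | G ⊆ sFace n m v S} \ 𝒜) =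
        Ψ ⁻¹' columnsTop (coordSubspace S k) a b := by
  have hfacets : {G ∈ sFaces n m d | G ⊆ sFace n m v S} = cubeFacet hm v S '' facetIndex S :=
    Set.ext fun _ => mem_sFaces_and_subset_sFace_iff hm hS
  rw [hfacets] at h𝒜 ⊢
  obtain ⟨T, hT, rfl⟩ := subset_image_iff.1 h𝒜
  lift T to Finset (Fin n × ℤˣ) using (facetIndex S).finite_toSet.subset hT
  have hinj := injOn_cubeFacet hm v S
  rw [(hinj.mono hT).ncard_image, ncard_coe_finset] at hcard
  rw [← hinj.image_sdiff_subset hT, ← Finset.coe_sdiff, sUnion_image_cubeFacet,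
    sUnion_image_cubeFacet]
  rw [sUnion_image_cubeFacet, (cubeCoord hm v S).isPreconnected_preimage] at hconn
  rw [Finset.coe_subset] at hT
  obtain ⟨k, η, hη, hη'⟩ := exists_mem_neg_notMem_of_isPreconnected hT
    (Finset.coe_nonempty.1 (image_nonempty.1 hne)) hcard hconn
  obtain ⟨Ψ, a, b, ha, hb, hbox, hbot, htop⟩ := exists_homeomorph_stdBox_columns hT hη hη'
  refine ⟨k, mem_facetIndex.1 (hT hη'), (cubeCoord hm v S).trans Ψ, a, b, ha, hb, ?_, ?_, ?_⟩
  · rw [sFace_eq_preimage_stdBox hm, hbox]; rfl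
  · rw [hbot]; rfl
  · rw [htop]; rfl

theorem exists_isAmbientIsotopy_of_homeomorph_columns {X Y H : Type*} [TopologicalSpace X]
    [NormedAddCommGroup Y] [NormedSpace ℝ Y] [NormedAddCommGroup H] [NormedSpace ℝ H]
    {Z : Submodule ℝ Y} {a b : Y → ℝ} (hZ : Module.finrank ℝ Z = 2)
    (hH : Module.finrank ℝ H = 2) (ha : Continuous a) (hb : Continuous b) (Ψ : X ≃ₜ Y × ℝ)
    {K : Set X} (hK : IsClosed K) [ChartedSpace H K]
    (hKZ : K ∩ Ψ ⁻¹' columns Z a b = Ψ ⁻¹' columnsBottom Z a b) :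
    ∃ h : ℝ → X ≃ₜ X, IsAmbientIsotopy h ∧
      h 1 '' K = (K \ Ψ ⁻¹' columnsBottom Z a b) ∪ Ψ ⁻¹' columnsTop Z a b := by
  let _ : ChartedSpace H (Ψ '' K) := (Ψ.image K).chartedSpace
  obtain ⟨h, hh, himage⟩ := exists_isAmbientIsotopy_columnsBottom hZ hH ha hb
    (Ψ.isClosedMap _ hK) (by rw [← image_inter_preimage, hKZ, Ψ.image_preimage])
  refine ⟨_, hh.conj Ψ, ?_⟩
  have hcomp : ((Ψ.trans (h 1)).trans Ψ.symm) '' K = Ψ.symm '' (h 1 '' (Ψ '' K)) := by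
    simp only [← image_comp]; rfl
  rw [hcomp, himage, Ψ.image_symm, preimage_union, preimage_sdiff, Ψ.preimage_image]

theorem exists_isAmbientIsotopy_sFace {H : Type*} [NormedAddCommGroup H] [NormedSpace ℝ H]
    (hH : Module.finrank ℝ H = 2) (hm : 0 < m) (hS : S.card = 3) {K : Set (Fin n → ℝ)}
    (hK : IsClosed K) [ChartedSpace H K] {𝒜 : Set (Set (Fin n → ℝ))}
    (h𝒜 : 𝒜 ⊆ {G ∈ sFaces n m 2 | G ⊆ sFace n m v S}) (hne : 𝒜.Nonempty) (hcard : 𝒜.ncard ≤ 3)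
    (hconn : IsPreconnected (⋃₀ 𝒜)) (hKF : K ∩ sFace n m v S = ⋃₀ 𝒜) :
    ∃ h : ℝ → (Fin n → ℝ) ≃ₜ (Fin n → ℝ), IsAmbientIsotopy h ∧
      h 1 '' K = (K \ ⋃₀ 𝒜) ∪ ⋃₀ ({G ∈ sFaces n m 2 | G ⊆ sFace n m v S} \ 𝒜) := by
  obtain ⟨k, hk, Ψ, a, b, ha, hb, hbox, hbot, htop⟩ :=
    exists_homeomorph_sFace_columns hm hS h𝒜 hne hcard hconn
  have hZ : Module.finrank ℝ (coordSubspace S k) = 2 := by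
    rw [finrank_coordSubspace, Finset.card_erase_of_mem hk, hS]
  rw [hbox, hbot] at hKF
  rw [hbot, htop]
  exact exists_isAmbientIsotopy_of_homeomorph_columns hZ hH ha hb Ψ hK hKF

end Move

theorem m2_move_ambient_isotopic_general {K K' : Set (Fin 4 → ℝ)} (hK : IsClosed K)
    [ChartedSpace (EuclideanSpace ℝ (Fin 2)) K] (h : M2Move K K') : AmbientIsotopic K K' := by
  obtain ⟨m, hm, _, ⟨v, S, hS, rfl⟩, 𝒜, h𝒜, hne, hcard, hKF, ⟨e⟩, rfl⟩ := h
  have hdisk : PreconnectedSpace Disk2 :=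
    isPreconnected_iff_preconnectedSpace.1 (convex_closedBall _ _).isPreconnected
  have hconn : IsPreconnected (⋃₀ 𝒜) :=
    isPreconnected_iff_preconnectedSpace.2
      (e.symm.surjective.denseRange.preconnectedSpace e.symm.continuous)
  obtain ⟨H, hH, himage⟩ := exists_isAmbientIsotopy_sFace finrank_euclideanSpace_fin hm hS hK
    h𝒜 hne hcard hconn hKF
  exact ⟨H, hH.1, hH.2, himage⟩

/-- Each face boundary move (M2) extends to an ambient isotopy of ℝ⁴;
in particular a cubical 2-knot and its image under an M2-move are ambient isotopic. -/
theorem m2_move_ambient_isotopic (K K' : Set (Fin 4 → ℝ))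
    (hK : IsCubical2Knot K) (h : M2Move K K') :
    AmbientIsotopic K K' := by
  obtain ⟨⟨e⟩, -⟩ := hK
  have hcompact : CompactSpace Sphere2 := isCompact_iff_compactSpace.1 (isCompact_sphere 0 1)
  have hclosed : IsClosed K := (isCompact_iff_compactSpace.2 e.symm.compactSpace).isClosed
  have : Fact (Module.finrank ℝ (EuclideanSpace ℝ (Fin 3)) = 2 + 1) :=
    ⟨finrank_euclideanSpace_fin⟩
  let _ : ChartedSpace (EuclideanSpace ℝ (Fin 2)) Sphere2 :=
    EuclideanSpace.instChartedSpaceSphere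
  let _ : ChartedSpace (EuclideanSpace ℝ (Fin 2)) K := e.symm.chartedSpace
  exact m2_move_ambient_isotopic_general hclosed h
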